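/- arXiv:1507.08617 — 7 statements merged into one kernel-verified Lean document; each statement's English description precedes it below -/
import Mathlib

section
/- Let m be an integer with m ≠ 1 and m ≠ -1, and let n ≥ 2 be a natural number. Then m^(n-1) divides n! (as integers) if and only if (m = 2 or m = -2) and n is a power of 2. -/
open Nat

lemma digsum_one (n : ℕ) : (Nat.digits 2 n).sum = 1 → ∃ k : ℕ, n = 2 ^ k := by
  induction n using Nat.strong_induction_on with
  | _ n ih =>
    intro h
    rcases Nat.eq_zero_or_pos n with rfl | hp
    · simp at h
    rw [Nat.digits_def' (by norm_num) hp, List.sum_cons] at h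
    rcases Nat.mod_two_eq_zero_or_one n with h0 | h1
    · obtain ⟨k, hk⟩ := ih (n / 2) (by omega) (by omega)
      exact ⟨k + 1, by rw [pow_succ]; omega⟩
    · have hs : (Nat.digits 2 (n / 2)).sum = 0 := by omega
      rcases Nat.eq_zero_or_pos (n / 2) with hz | hq
      · exact ⟨0, by simp; omega⟩
      · exfalso
        have := @sub_one_mul_padicValNat_factorial_lt_of_ne_zero 2 _ (n / 2) (by omega)
        rw [sub_one_mul_padicValNat_factorial, hs] at this
        omega

lemma digsum_pow (k : ℕ) : (Nat.digits 2 (2 ^ k)).sum = 1 := by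
  induction k with
  | zero => simp
  | succ k ih =>
    rw [Nat.digits_def' (by norm_num) (by positivity), List.sum_cons]
    have h1 : 2 ^ (k + 1) % 2 = 0 := by rw [pow_succ]; omega
    have h2 : 2 ^ (k + 1) / 2 = 2 ^ k := by rw [pow_succ]; omega
    rw [h1, h2, ih]

lemma two_pow_dvd (n : ℕ) (hn : 2 ≤ n) : 2 ^ (n - 1) ∣ n ! ↔ ∃ k : ℕ, n = 2 ^ k := by
  rw [padicValNat_dvd_iff_le (Nat.factorial_ne_zero n)]
  have h1 := @sub_one_mul_padicValNat_factorial 2 _ n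
  have h2 := @sub_one_mul_padicValNat_factorial_lt_of_ne_zero 2 _ n (by omega)
  have h3 := Nat.digit_sum_le 2 n
  constructor
  · intro h
    exact digsum_one n (by omega)
  · rintro ⟨k, hk⟩
    have := digsum_pow k
    rw [← hk] at this
    omega

lemma prime_two (p n : ℕ) (hp : p.Prime) (hn : 2 ≤ n) (h : p ^ (n - 1) ∣ n !) : p = 2 := by
  haveI := Fact.mk hp
  rw [padicValNat_dvd_iff_le (Nat.factorial_ne_zero n)] at h
  have h2 := @sub_one_mul_padicValNat_factorial_lt_of_ne_zero p _ n (by omega)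
  by_contra hne
  have := hp.two_le
  have h3 : 2 * padicValNat p n ! ≤ (p - 1) * padicValNat p n ! :=
    Nat.mul_le_mul_right _ (by omega)
  omega

lemma nat_version (a n : ℕ) (ha : a ≠ 1) (hn : 2 ≤ n) (h : a ^ (n - 1) ∣ n !) : a = 2 := by
  have key : ∀ p : ℕ, p.Prime → p ∣ a → p = 2 := fun p hp hd =>
    prime_two p n hp hn ((pow_dvd_pow_of_dvd hd _).trans h)
  obtain ⟨p, hp, hd⟩ := Nat.exists_prime_and_dvd ha
  obtain rfl := key p hp hd
  obtain ⟨b, rfl⟩ := hd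
  by_contra hb
  obtain ⟨q, hq, hqd⟩ := Nat.exists_prime_and_dvd (n := b) (by omega)
  obtain rfl := key q hq (hqd.mul_left 2)
  have h4 : (2 * 2) ^ (n - 1) ∣ n ! :=
    (pow_dvd_pow_of_dvd (Nat.mul_dvd_mul_left 2 hqd) _).trans h
  rw [← pow_two, ← pow_mul, padicValNat_dvd_iff_le (Nat.factorial_ne_zero n)] at h4
  have h2 := @sub_one_mul_padicValNat_factorial_lt_of_ne_zero 2 _ n (by omega)
  omega

/-- Lemma 13 of the paper: for an integer `m ≠ ±1` and `n ≥ 2`,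
`m^(n-1)` divides `n!` (in `ℤ`) iff `m = ±2` and `n` is a power of `2`. -/
theorem divisibility_factorial_power (m : ℤ) (hm1 : m ≠ 1) (hm2 : m ≠ -1)
    (n : ℕ) (hn : 2 ≤ n) :
    m ^ (n - 1) ∣ (n ! : ℤ) ↔ (m = 2 ∨ m = -2) ∧ ∃ k : ℕ, n = 2 ^ k := by
  rw [← Int.natAbs_dvd_natAbs, Int.natAbs_pow, Int.natAbs_natCast]
  constructor
  · intro h
    have h2 := nat_version m.natAbs n (by omega) hn h
    rw [h2] at h
    exact ⟨by omega, (two_pow_dvd n hn).1 h⟩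
  · rintro ⟨hm, hk⟩
    have h2 : m.natAbs = 2 := by omega
    rw [h2]
    exact (two_pow_dvd n hn).2 hk
end

section
/- Let p be a prime number and let n ≥ 2 be a natural number. If p^(n-1) divides n!, then p = 2 and n is a power of 2. -/
open Nat

theorem pow_two_of_digits_sum (n : ℕ) (h0 : n ≠ 0) (h : (Nat.digits 2 n).sum ≤ 1) :
    ∃ k : ℕ, n = 2 ^ k := by
  induction n using Nat.strong_induction_on with
  | _ n ih =>
    rw [Nat.digits_def' (by norm_num) (by omega), List.sum_cons] at h
    by_cases h1 : n / 2 = 0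
    · exact ⟨0, by norm_num; omega⟩
    · obtain ⟨k, hk⟩ := ih (n / 2) (by omega) h1 (by omega)
      have hs : (Nat.digits 2 (n / 2)).sum ≠ 0 := by
        intro hs
        have hl := Nat.getLast_digit_ne_zero 2 h1
        exact hl (List.sum_eq_zero_iff.mp hs _ (List.getLast_mem _))
      exact ⟨k + 1, by rw [pow_succ]; omega⟩

/-- The prime case of Lemma 13: if `p` is prime, `n ≥ 2` and `p^(n-1) ∣ n!`,
then `p = 2` and `n` is a power of `2`. -/
theorem prime_pow_dvd_factorial (p n : ℕ) (hp : p.Prime) (hn : 2 ≤ n)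
    (hdvd : p ^ (n - 1) ∣ n !) :
    p = 2 ∧ ∃ k : ℕ, n = 2 ^ k := by
  haveI := Fact.mk hp
  have hv : n - 1 ≤ padicValNat p n ! :=
    (padicValNat_dvd_iff_le (Nat.factorial_ne_zero n)).mp hdvd
  have hlt := sub_one_mul_padicValNat_factorial_lt_of_ne_zero p (n := n) (by omega)
  have hp2 : p = 2 := by
    by_contra hne
    have h2 := hp.two_le
    have : 2 * padicValNat p n ! ≤ (p - 1) * padicValNat p n ! :=
      Nat.mul_le_mul_right _ (by omega)
    omega
  subst hp2
  have he := sub_one_mul_padicValNat_factorial (p := 2) n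
  refine ⟨rfl, pow_two_of_digits_sum n (by omega) (by omega)⟩
end

section
/- Let d and k be integers. Define a sequence of integers x_r for r ≥ 2 by x_2 = d² − k² and, for r ≥ 3, x_r = (r−1)·(−1)^r·(d^r − k^r) + Σ_{m=2}^{r−1} C(r,m)·(−1)^{r−m+1}·d^{r−m}·x_m, where C(r,m) is the binomial coefficient. Then for every r ≥ 2, x_r = (d − k)^{r−1}·(d + (r−1)·k). -/
open Nat Finset

theorem aux_deriv (e b : ℤ) (n : ℕ) :
    ∑ m ∈ Finset.range (n + 2), ((n + 1).choose m : ℤ) * b ^ (n + 1 - m) * (m * e ^ (m - 1))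
      = (n + 1) * (e + b) ^ n := by
  rw [Finset.sum_range_succ', add_pow, Finset.mul_sum]
  simp only [Nat.cast_zero, zero_mul, mul_zero, add_zero]
  refine Finset.sum_congr rfl fun m _ => ?_
  have h : ((n : ℤ) + 1) * (n.choose m : ℤ) = ((n + 1).choose (m + 1) : ℤ) * (m + 1) := by
    exact_mod_cast Nat.add_one_mul_choose_eq n m
  have h2 : n + 1 - (m + 1) = n - m := by omega
  rw [h2, Nat.add_sub_cancel]
  push_cast
  linear_combination (-(e ^ m * b ^ (n - m))) * h

theorem aux_main (d k : ℤ) (n : ℕ) :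
    ∑ m ∈ Finset.range (n + 2), ((n + 1).choose m : ℤ) * (-d) ^ (n + 1 - m) *
      ((d - k) ^ m + k * (m * (d - k) ^ (m - 1))) = -n * (-k) ^ (n + 1) := by
  have h1 := aux_deriv (d - k) (-d) n
  have h2 := add_pow (d - k) (-d) (n + 1)
  have h3 : d - k + -d = -k := by ring
  rw [h3] at h1 h2
  have : ∑ m ∈ Finset.range (n + 2), ((n + 1).choose m : ℤ) * (-d) ^ (n + 1 - m) *
      ((d - k) ^ m + k * (m * (d - k) ^ (m - 1))) = (-k) ^ (n + 1) + k * ((n + 1) * (-k) ^ n) := by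
    rw [← h1, h2, Finset.mul_sum, ← Finset.sum_add_distrib]
    refine Finset.sum_congr rfl fun m _ => ?_
    ring
  rw [this]
  ring

/-- The closed-form identity from the proof of Lemma 15: if `x 2 = d² - k²` and
`x r = (r-1)·(-1)^r·(d^r - k^r) + Σ_{m=2}^{r-1} C(r,m)·(-1)^{r-m+1}·d^{r-m}·x m`
for `r ≥ 3`, then `x r = (d - k)^{r-1}·(d + (r-1)·k)` for all `r ≥ 2`. -/
theorem closed_form_x (d k : ℤ) (x : ℕ → ℤ)
    (hx2 : x 2 = d ^ 2 - k ^ 2)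
    (hxr : ∀ r : ℕ, 3 ≤ r →
      x r = ((r : ℤ) - 1) * (-1) ^ r * (d ^ r - k ^ r) +
        ∑ m ∈ Finset.Icc 2 (r - 1),
          (r.choose m : ℤ) * (-1) ^ (r - m + 1) * d ^ (r - m) * x m) :
    ∀ r : ℕ, 2 ≤ r → x r = (d - k) ^ (r - 1) * (d + ((r : ℤ) - 1) * k) := by
  intro r
  induction r using Nat.strong_induction_on with
  | _ r ih =>
  intro hr
  rcases Nat.lt_or_ge r 3 with h | h
  · obtain rfl : r = 2 := by omega
    rw [hx2]; push_cast; ring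
  obtain ⟨n, rfl⟩ : ∃ n, r = n + 1 := ⟨r - 1, by omega⟩
  have hy : ∀ m : ℕ, 2 ≤ m → (d - k) ^ (m - 1) * (d + ((m : ℤ) - 1) * k)
      = (d - k) ^ m + k * (m * (d - k) ^ (m - 1)) := by
    intro m hm
    obtain ⟨j, rfl⟩ : ∃ j, m = j + 1 := ⟨m - 1, by omega⟩
    rw [Nat.add_sub_cancel]; push_cast; ring
  have hm := aux_main d k n
  rw [Finset.sum_range_succ, Finset.range_eq_Ico, Finset.sum_eq_sum_Ico_succ_bot (by omega),
    Finset.sum_eq_sum_Ico_succ_bot (by omega)] at hm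
  have hI : Finset.Icc 2 (n + 1 - 1) = Finset.Ico (0 + 1 + 1) (n + 1) := by
    ext a; simp only [Finset.mem_Icc, Finset.mem_Ico]; omega
  rw [hxr _ h, hy _ hr, hI]
  have hs : ∑ m ∈ Finset.Ico (0 + 1 + 1) (n + 1),
      ((n + 1).choose m : ℤ) * (-1) ^ (n + 1 - m + 1) * d ^ (n + 1 - m) * x m
      = - ∑ m ∈ Finset.Ico (0 + 1 + 1) (n + 1), ((n + 1).choose m : ℤ) * (-d) ^ (n + 1 - m) *
      ((d - k) ^ m + k * (m * (d - k) ^ (m - 1))) := by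
    rw [← Finset.sum_neg_distrib]
    refine Finset.sum_congr rfl fun m hm => ?_
    rw [Finset.mem_Ico] at hm
    rw [ih m (by omega) (by omega), hy m (by omega), neg_pow d]
    ring
  rw [hs]
  simp only [Nat.choose_zero_right, Nat.choose_self, zero_add, Nat.choose_one_right,
    Nat.sub_self, Nat.sub_zero, Nat.add_sub_cancel, pow_zero, pow_one, Nat.cast_zero,
    Nat.cast_one, zero_mul, mul_zero, add_zero, mul_one, one_mul] at hm ⊢
  rw [neg_pow d (n + 1), neg_pow d n, neg_pow k] at hm
  push_cast at hm ⊢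
  linear_combination -hm
end

section
/- Let n ≥ 2 be a natural number and let d, k be integers with k > 0. Suppose that for every r with 2 ≤ r ≤ n, the integer (n!)^(r−1) divides (d − k)^(r−1)·(d + (r−1)·k). Then n! divides d − k. -/
open Nat

lemma aux_not_pow_dvd (p n : ℕ) (hp : p.Prime) (hn : 1 ≤ n) : ¬ p ^ n ∣ n ! := by
  intro h
  have := Fact.mk hp
  have h1 := (padicValNat_dvd_iff_le (p := p) (Nat.factorial_ne_zero n)).1 h
  have h2 := sub_one_mul_padicValNat_factorial (p := p) n
  have h3 : 0 < (p.digits n).sum := by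
    by_contra h0
    have h5 : (p.digits n).sum = 0 := by omega
    have hne : p.digits n ≠ [] := Nat.digits_ne_nil_iff_ne_zero.2 (by omega)
    have h6 := Nat.getLast_digit_ne_zero p (m := n) (by omega)
    exact h6 (List.sum_eq_zero_iff.1 h5 _ (List.getLast_mem hne))
  have h7 := hp.two_le
  have h8 : padicValNat p (n !) ≤ (p - 1) * padicValNat p (n !) :=
    Nat.le_mul_of_pos_left _ (by omega)
  omega

/-- The arithmetic core of Lemma 15: if `n ≥ 2`, `k > 0`, and for every
`2 ≤ r ≤ n` the integer `(n!)^(r-1)` divides `(d-k)^(r-1)·(d + (r-1)·k)`,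
then `n!` divides `d - k`. -/
theorem factorial_dvd_sub (n : ℕ) (hn : 2 ≤ n) (d k : ℤ) (hk : 0 < k)
    (h : ∀ r : ℕ, 2 ≤ r → r ≤ n →
      (n ! : ℤ) ^ (r - 1) ∣ (d - k) ^ (r - 1) * (d + ((r : ℤ) - 1) * k)) :
    (n ! : ℤ) ∣ d - k := by
  by_contra hnd
  have he0 : d - k ≠ 0 := by
    intro h0; rw [h0] at hnd; exact hnd (dvd_zero _)
  have hex : ∃ p j : ℕ, p.Prime ∧ p ^ j ∣ n ! ∧ ¬ p ^ j ∣ (d - k).natAbs := by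
    by_contra! hc
    apply hnd
    rw [Int.natCast_dvd]
    exact (Nat.dvd_iff_prime_pow_dvd_dvd _ _).2 hc
  obtain ⟨p, j, hp, hjN, hje⟩ := hex
  have hpi : Prime (p : ℤ) := Nat.prime_iff_prime_int.1 hp
  have hfin : FiniteMultiplicity (p : ℤ) (d - k) :=
    FiniteMultiplicity.of_prime_left hpi he0
  obtain ⟨u, hu, hpu⟩ := hfin.exists_eq_pow_mul_and_not_dvd
  generalize multiplicity (p : ℤ) (d - k) = b at hu
  have hbj : b < j := by
    by_contra hc
    apply hje
    rw [← Int.natCast_dvd]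
    push_cast
    rw [hu]
    exact (pow_dvd_pow _ (by omega)).mul_right _
  have hbN : p ^ (b + 1) ∣ n ! := (pow_dvd_pow _ hbj).trans hjN
  have key : ∀ r : ℕ, 2 ≤ r → r ≤ n → (p : ℤ) ^ (r - 1) ∣ (d - k) + r * k := by
    intro r h2 hr
    have h1 := h r h2 hr
    have h3 : ((p : ℤ) ^ (b + 1)) ^ (r - 1) ∣ (n ! : ℤ) ^ (r - 1) :=
      pow_dvd_pow_of_dvd (by exact_mod_cast hbN) _
    have h4 := h3.trans h1
    have e1 : d + ((r : ℤ) - 1) * k = (d - k) + r * k := by ring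
    rw [e1] at h4
    generalize (d - k) + r * k = y at h4
    rw [hu, mul_pow, pow_succ, mul_pow, mul_assoc] at h4
    have h5 := (mul_dvd_mul_iff_left (pow_ne_zero _ (pow_ne_zero _ hpi.ne_zero))).1 h4
    exact hpi.pow_dvd_of_dvd_mul_left _ (fun hc => hpu (hpi.dvd_of_dvd_pow hc)) h5
  have hn' := key n hn le_rfl
  have hkd : (p : ℤ) ^ (n - 2) ∣ k := by
    rcases Nat.lt_or_ge n 3 with h3 | h3
    · have : n = 2 := by omega
      subst this; simp
    · have h1 := key (n - 1) (by omega) (by omega)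
      have h2 := (pow_dvd_pow (p : ℤ) (show n - 2 ≤ n - 1 by omega)).trans hn'
      have h4 := dvd_sub h2 h1
      rw [Nat.cast_sub (by omega)] at h4
      have e2 : d - k + (n : ℤ) * k - (d - k + ((n : ℤ) - ((1 : ℕ) : ℤ)) * k) = k := by
        push_cast; ring
      rwa [e2] at h4
  have hb : ∀ m : ℕ, (p : ℤ) ^ m ∣ d - k → m ≤ b := by
    intro m hm
    by_contra hc
    have h1 := (pow_dvd_pow (p : ℤ) (show b + 1 ≤ m by omega)).trans hm
    rw [hu, pow_succ] at h1
    exact hpu ((mul_dvd_mul_iff_left (pow_ne_zero _ hpi.ne_zero)).1 h1)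
  by_cases hpn : p ∣ n
  · have h1 : (p : ℤ) ^ (n - 1) ∣ n * k := by
      have e : n - 1 = (n - 2) + 1 := by omega
      rw [e, pow_succ, mul_comm]
      exact mul_dvd_mul (by exact_mod_cast hpn) hkd
    have h2 := hb (n - 1) ((dvd_add_left h1).1 hn')
    exact aux_not_pow_dvd p n hp (by omega) ((pow_dvd_pow _ (by omega)).trans hbN)
  · have h1 : (p : ℤ) ^ (n - 2) ∣ n * k := hkd.mul_left _
    have h2 := hb (n - 2) ((dvd_add_left h1).1
      ((pow_dvd_pow (p : ℤ) (show n - 2 ≤ n - 1 by omega)).trans hn'))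
    have h3 : p ^ (n - 1) ∣ n ! := (pow_dvd_pow _ (by omega)).trans hbN
    rw [← Nat.mul_factorial_pred (by omega)] at h3
    have h4 : Nat.Coprime (p ^ (n - 1)) n :=
      Nat.Coprime.pow_left _ ((Nat.Prime.coprime_iff_not_dvd hp).2 hpn)
    exact aux_not_pow_dvd p (n - 1) hp (by omega) (h4.dvd_of_dvd_mul_left h3)
end

section
/- Let R be a commutative ring, let n ≥ 1 be a natural number, and work in the exterior algebra of the free R-module R^(2n) with standard basis e_1, …, e_{2n}. Let θ = −(e_1∧e_{n+1} + ⋯ + e_n∧e_{2n}), and let ω = Σ_{1 ≤ i < j ≤ 2n} a_{ij}·e_i∧e_j for coefficients a_{ij} in R. Then ω∧θ^(n−1) = (−1)^(n−1)·(n−1)!·(a_{1,n+1} + a_{2,n+2} + ⋯ + a_{n,2n})·(e_1∧e_{n+1})∧(e_2∧e_{n+2})∧⋯∧(e_n∧e_{2n}). -/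
open Finset

/-- The embedding `{1,…,n} → {1,…,2n}`, `i ↦ i`. -/
def loIdx (n : ℕ) (i : Fin n) : Fin (2 * n) := ⟨i.1, by have := i.isLt; omega⟩

/-- The embedding `{1,…,n} → {1,…,2n}`, `i ↦ n + i`. -/
def hiIdx (n : ℕ) (i : Fin n) : Fin (2 * n) := ⟨n + i.1, by have := i.isLt; omega⟩

/-- The `i`-th standard basis vector of `R^(2n)`, viewed in the exterior algebra. -/
noncomputable def stdVec (R : Type*) [CommRing R] (n : ℕ) (i : Fin (2 * n)) :
    ExteriorAlgebra R (Fin (2 * n) → R) :=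
  ExteriorAlgebra.ι R (Pi.single i 1)

/-- The degree-two element `e_i ∧ e_{n+i}` of the exterior algebra of `R^(2n)`. -/
noncomputable def pairWedge (R : Type*) [CommRing R] (n : ℕ) (i : Fin n) :
    ExteriorAlgebra R (Fin (2 * n) → R) :=
  stdVec R n (loIdx n i) * stdVec R n (hiIdx n i)

theorem aux_add_pow {C : Type*} [CommRing C] (p q : C) (hp : p * p = 0) (k : ℕ) :
    (p + q) ^ (k + 1) = q ^ (k + 1) + (k + 1 : ℕ) * p * q ^ k := by
  induction k with
  | zero => simp; ring
  | succ k ih =>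
    rw [pow_succ, ih]
    push_cast
    linear_combination ((k : C) + 1) * q ^ k * hp

theorem aux_pow {C ι : Type*} [CommRing C] [DecidableEq ι] (P : ι → C)
    (hP : ∀ i, P i * P i = 0) (s : Finset ι) :
    (∑ i ∈ s, P i) ^ s.card = (s.card.factorial : C) * ∏ i ∈ s, P i ∧
      ∀ k, s.card < k → (∑ i ∈ s, P i) ^ k = 0 := by
  induction s using Finset.induction_on with
  | empty =>
    refine ⟨by simp, fun k hk => ?_⟩
    rw [Finset.sum_empty, zero_pow (by omega)]
  | insert b s hb ih =>
    obtain ⟨h1, h2⟩ := ih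
    rw [Finset.sum_insert hb, Finset.card_insert_of_notMem hb, Finset.prod_insert hb]
    refine ⟨?_, fun k hk => ?_⟩
    · rw [aux_add_pow _ _ (hP b), h2 _ (Nat.lt_succ_self _), h1, Nat.factorial_succ]
      push_cast
      ring
    · obtain ⟨k, rfl⟩ : ∃ m, k = m + 1 := ⟨k - 1, by omega⟩
      rw [aux_add_pow _ _ (hP b), h2 _ (by omega), h2 _ (by omega)]
      simp

theorem aux_kill {A : Type*} [Ring A] (x u v : A) (huv : Commute u v) (h : x * u = 0) (k : ℕ) :
    x * (u + v) ^ k = x * v ^ k := by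
  induction k with
  | zero => simp
  | succ k ih =>
    have hc : Commute u (v ^ k) := huv.pow_right k
    rw [pow_succ, ← mul_assoc, ih, mul_add, mul_assoc, ← hc.eq, ← mul_assoc, h, zero_mul, zero_add,
      mul_assoc, ← pow_succ]

theorem aux_swap (R : Type*) [CommRing R] {M : Type*} [AddCommGroup M] [Module R M] (x y : M) :
    ExteriorAlgebra.ι R x * ExteriorAlgebra.ι R y =
      -(ExteriorAlgebra.ι R y * ExteriorAlgebra.ι R x) :=
  eq_neg_of_add_eq_zero_left (ExteriorAlgebra.ι_add_mul_swap x y)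

theorem aux_comm (R : Type*) [CommRing R] {M : Type*} [AddCommGroup M] [Module R M] (x y : M)
    (z : ExteriorAlgebra R M) :
    Commute (ExteriorAlgebra.ι R x * ExteriorAlgebra.ι R y) z := by
  induction z using ExteriorAlgebra.induction with
  | algebraMap r => exact (Algebra.commutes r _).symm
  | ι m =>
    show _ * _ = _ * _
    rw [mul_assoc, aux_swap R y m, mul_neg, ← mul_assoc, aux_swap R x m, neg_mul, neg_neg,
      mul_assoc]
  | mul a b ha hb => exact ha.mul_right hb
  | add a b ha hb => exact ha.add_right hb

theorem aux_pair_comm (R : Type*) [CommRing R] (n : ℕ) (i : Fin n)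
    (z : ExteriorAlgebra R (Fin (2 * n) → R)) : Commute (pairWedge R n i) z :=
  aux_comm R _ _ z

theorem aux_std_sq (R : Type*) [CommRing R] (n : ℕ) (i : Fin (2 * n)) :
    stdVec R n i * stdVec R n i = 0 := ExteriorAlgebra.ι_sq_zero _

/-- index of the pair containing `i` -/
def aux_idx (n : ℕ) (i : Fin (2 * n)) : Fin n :=
  if h : i.1 < n then ⟨i.1, h⟩ else ⟨i.1 - n, by have := i.isLt; omega⟩

theorem aux_idx_cases (n : ℕ) (i : Fin (2 * n)) :
    i = loIdx n (aux_idx n i) ∨ i = hiIdx n (aux_idx n i) := by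
  unfold aux_idx
  split_ifs with h
  · left; simp [loIdx]
  · right; ext; simp [hiIdx]; omega

theorem aux_std_pair (R : Type*) [CommRing R] (n : ℕ) (i : Fin (2 * n)) :
    stdVec R n i * pairWedge R n (aux_idx n i) = 0 := by
  rcases aux_idx_cases n i with h | h
  · unfold pairWedge
    rw [← h, ← mul_assoc, aux_std_sq, zero_mul]
  · rw [← (aux_pair_comm R n _ _).eq]
    unfold pairWedge
    rw [← h, mul_assoc, aux_std_sq, mul_zero]

theorem aux_pair_sq (R : Type*) [CommRing R] (n : ℕ) (i : Fin n) :
    pairWedge R n i * pairWedge R n i = 0 := by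
  have h := (aux_pair_comm R n i (stdVec R n (loIdx n i))).eq
  nth_rewrite 2 [pairWedge]
  rw [← mul_assoc, h]
  nth_rewrite 1 [pairWedge]
  rw [← mul_assoc, aux_std_sq, zero_mul, zero_mul]

/-- the pairs as central elements -/
noncomputable def auxP (R : Type*) [CommRing R] (n : ℕ) (i : Fin n) :
    Subring.center (ExteriorAlgebra R (Fin (2 * n) → R)) :=
  ⟨pairWedge R n i, Subring.mem_center_iff.2 fun z => (aux_pair_comm R n i z).eq.symm⟩

theorem auxP_sq (R : Type*) [CommRing R] (n : ℕ) (i : Fin n) : auxP R n i * auxP R n i = 0 :=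
  Subtype.ext (aux_pair_sq R n i)

theorem aux_restrict (R : Type*) [CommRing R] (n : ℕ) (x : ExteriorAlgebra R (Fin (2 * n) → R))
    (t : Finset (Fin n)) (ht : ∀ l ∈ t, x * pairWedge R n l = 0) (k : ℕ) :
    x * (∑ i, pairWedge R n i) ^ k =
      x * (((∑ i ∈ tᶜ, auxP R n i) ^ k :
        Subring.center (ExteriorAlgebra R (Fin (2 * n) → R))) : ExteriorAlgebra R _) := by
  rw [← Finset.sum_add_sum_compl t, aux_kill]
  · simp [auxP]
  · exact Commute.sum_left _ _ _ fun i _ => aux_pair_comm R n i _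
  · rw [Finset.mul_sum]
    exact Finset.sum_eq_zero ht

theorem aux_prod (R : Type*) [CommRing R] (n : ℕ) :
    (List.ofFn (pairWedge R n)).prod = ((∏ i, auxP R n i :
        Subring.center (ExteriorAlgebra R (Fin (2 * n) → R))) : ExteriorAlgebra R _) := by
  rw [← List.prod_ofFn]
  change _ = (Subring.center (ExteriorAlgebra R (Fin (2 * n) → R))).subtype _
  rw [map_list_prod, List.map_ofFn]
  rfl

theorem aux_diag (R : Type*) [CommRing R] (n : ℕ) (l : Fin n) :
    pairWedge R n l * (∑ i, pairWedge R n i) ^ (n - 1) =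
      ((n - 1).factorial : ExteriorAlgebra R (Fin (2 * n) → R)) *
        (List.ofFn (pairWedge R n)).prod := by
  rw [aux_restrict R n _ {l} (by simpa using aux_pair_sq R n l), aux_prod]
  have h := (aux_pow (auxP R n) (auxP_sq R n) {l}ᶜ).1
  have hc : ({l}ᶜ : Finset (Fin n)).card = n - 1 := by simp [Finset.card_compl]
  rw [hc] at h
  have h2 : auxP R n l * (∑ i ∈ {l}ᶜ, auxP R n i) ^ (n - 1) =
      ((n - 1).factorial : Subring.center (ExteriorAlgebra R (Fin (2 * n) → R))) *
        ∏ i, auxP R n i := by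
    rw [h, ← Finset.prod_mul_prod_compl {l} (auxP R n), Finset.prod_singleton]
    ring
  have h3 := congrArg (Subring.center (ExteriorAlgebra R (Fin (2 * n) → R))).subtype h2
  rw [map_mul, map_mul, map_natCast] at h3
  exact h3

theorem aux_offdiag (R : Type*) [CommRing R] (n : ℕ) (i j : Fin (2 * n))
    (hij : aux_idx n i ≠ aux_idx n j) :
    stdVec R n i * stdVec R n j * (∑ i, pairWedge R n i) ^ (n - 1) = 0 := by
  rw [aux_restrict R n _ {aux_idx n i, aux_idx n j}]
  · rw [(aux_pow (auxP R n) (auxP_sq R n) _).2]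
    · simp
    · rw [Finset.card_compl, Finset.card_pair hij, Fintype.card_fin]
      have h1 := (aux_idx n i).isLt
      have h2 := (aux_idx n j).isLt
      have h3 : (aux_idx n i).1 ≠ (aux_idx n j).1 := fun h => hij (Fin.ext h)
      omega
  · intro l hl
    rw [Finset.mem_insert, Finset.mem_singleton] at hl
    rcases hl with rfl | rfl
    · rw [mul_assoc, ← (aux_pair_comm R n _ _).eq, ← mul_assoc, aux_std_pair, zero_mul]
    · rw [mul_assoc, aux_std_pair, mul_zero]

theorem aux_term (R : Type*) [CommRing R] (n : ℕ) (i j : Fin (2 * n)) (hij : i < j) :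
    stdVec R n i * stdVec R n j * (∑ i, pairWedge R n i) ^ (n - 1) =
      ∑ l : Fin n, if i = loIdx n l then (if j = hiIdx n l then
        ((n - 1).factorial : ExteriorAlgebra R (Fin (2 * n) → R)) *
        (List.ofFn (pairWedge R n)).prod else 0) else 0 := by
  by_cases h : aux_idx n i = aux_idx n j
  · have hi := aux_idx_cases n i
    have hj := aux_idx_cases n j
    rw [← h] at hj
    generalize aux_idx n i = l at hi hj
    have hl := l.isLt
    have : i = loIdx n l ∧ j = hiIdx n l := by
      rcases hi with rfl | rfl <;> rcases hj with rfl | rfl <;>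
        simp [loIdx, hiIdx] at hij ⊢
    obtain ⟨rfl, rfl⟩ := this
    rw [Finset.sum_eq_single (M := ExteriorAlgebra R (Fin (2 * n) → R)) (s := Finset.univ) (f := fun m => if loIdx n l = loIdx n m then (if hiIdx n l = hiIdx n m then ((n - 1).factorial : ExteriorAlgebra R (Fin (2 * n) → R)) * (List.ofFn (pairWedge R n)).prod else 0) else 0) l]
    · rw [if_pos rfl, if_pos rfl]
      exact aux_diag R n l
    · intro b _ hb
      rw [if_neg]
      intro h
      apply hb
      simp [loIdx] at h
      exact (Fin.ext h).symm
    · simp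
  · rw [aux_offdiag R n i j h, Finset.sum_eq_zero]
    intro l _
    split_ifs with h1 h2
    · exfalso
      apply h
      subst h1 h2
      simp [aux_idx, loIdx, hiIdx]
    · rfl
    · rfl

/-- Lemma 22 of the paper, as a pure exterior-algebra identity: with
`θ = −(e_1∧e_{n+1} + ⋯ + e_n∧e_{2n})` and `ω = Σ_{1 ≤ i < j ≤ 2n} a_{ij} e_i∧e_j`
in the exterior algebra of `R^(2n)`, one has
`ω∧θ^(n−1) = (−1)^(n−1)·(n−1)!·(a_{1,n+1} + ⋯ + a_{n,2n})·
(e_1∧e_{n+1})∧⋯∧(e_n∧e_{2n})`. -/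
theorem omega_mul_theta_pow (R : Type*) [CommRing R] (n : ℕ) (hn : 1 ≤ n)
    (a : Fin (2 * n) → Fin (2 * n) → R)
    (θ ω : ExteriorAlgebra R (Fin (2 * n) → R))
    (hθ : θ = -∑ i : Fin n, pairWedge R n i)
    (hω : ω = ∑ i : Fin (2 * n), ∑ j ∈ Finset.univ.filter (fun j => i < j),
      a i j • (stdVec R n i * stdVec R n j)) :
    ω * θ ^ (n - 1) =
      (-1) ^ (n - 1) * ((n - 1).factorial : ExteriorAlgebra R (Fin (2 * n) → R)) *
        ((∑ i : Fin n, a (loIdx n i) (hiIdx n i)) •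
          (List.ofFn (pairWedge R n)).prod) := by
  subst hθ hω
  have key : (∑ i : Fin (2 * n), ∑ j ∈ Finset.univ.filter (fun j => i < j),
      a i j • (stdVec R n i * stdVec R n j)) * (∑ i, pairWedge R n i) ^ (n - 1) =
      (∑ i : Fin n, a (loIdx n i) (hiIdx n i)) •
        (((n - 1).factorial : ExteriorAlgebra R (Fin (2 * n) → R)) *
          (List.ofFn (pairWedge R n)).prod) := by
    generalize hQ : ((n - 1).factorial : ExteriorAlgebra R (Fin (2 * n) → R)) *
          (List.ofFn (pairWedge R n)).prod = Q
    calc _ = ∑ i : Fin (2 * n), ∑ j : Fin (2 * n), ∑ l : Fin n,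
          (if i = loIdx n l then (if j = hiIdx n l then a i j • Q else 0) else 0) := by
          rw [Finset.sum_mul]
          refine Finset.sum_congr rfl fun i _ => ?_
          rw [Finset.sum_mul, Finset.sum_filter]
          refine Finset.sum_congr rfl fun j _ => ?_
          split_ifs with hij
          · rw [smul_mul_assoc, aux_term R n i j hij, hQ, Finset.smul_sum]
            refine Finset.sum_congr rfl fun l _ => ?_
            split_ifs <;> simp
          · symm
            refine Finset.sum_eq_zero fun l _ => ?_
            split_ifs with h1 h2
            · exfalso
              apply hij
              subst h1 h2
              have := l.isLt
              simp [loIdx, hiIdx]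
              omega
            · rfl
            · rfl
      _ = ∑ l : Fin n, ∑ i : Fin (2 * n), ∑ j : Fin (2 * n),
          (if i = loIdx n l then (if j = hiIdx n l then a i j • Q else 0) else 0) := by
          rw [Finset.sum_comm]
          simp_rw [Finset.sum_comm (s := (Finset.univ : Finset (Fin (2 * n)))) (t := (Finset.univ : Finset (Fin n)))]
          refine Finset.sum_congr rfl fun l _ => Finset.sum_comm
      _ = _ := by
          rw [Finset.sum_smul]
          refine Finset.sum_congr rfl fun l _ => ?_
          rw [Finset.sum_eq_single (loIdx n l)]
          · simp
          · intro b _ hb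
            simp [hb]
          · simp
  have hc : ∀ x : ExteriorAlgebra R (Fin (2 * n) → R),
      Commute ((-1 : ExteriorAlgebra R (Fin (2 * n) → R)) ^ (n - 1)) x :=
    fun x => (Commute.neg_one_left x).pow_left _
  rw [neg_pow, ← mul_assoc, ← (hc _).eq, mul_assoc, key, mul_assoc, mul_smul_comm, mul_smul_comm, mul_smul_comm]
end

section
/- For every natural number n ≥ 1, 2^(n−1) divides n! if and only if n is a power of 2. -/
open Nat

lemma digsum_aux (n : ℕ) (hn : 1 ≤ n) : 1 ≤ (Nat.digits 2 n).sum ∧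
    ((Nat.digits 2 n).sum ≤ 1 ↔ ∃ k : ℕ, n = 2 ^ k) := by
  induction n using Nat.strong_induction_on with
  | _ n ih =>
    rw [Nat.digits_def' (by norm_num) hn, List.sum_cons]
    rcases Nat.lt_or_ge n 2 with h | h
    · obtain rfl : n = 1 := by omega
      simp only [Nat.reduceMod, Nat.reduceDiv, Nat.digits_zero, List.sum_nil]
      exact ⟨le_rfl, fun _ => ⟨0, rfl⟩, fun _ => le_rfl⟩
    · obtain ⟨h1, h2⟩ := ih (n / 2) (by omega) (by omega)
      refine ⟨by omega, ?_, ?_⟩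
      · intro hs
        obtain ⟨k, hk⟩ := h2.1 (by omega)
        exact ⟨k + 1, by rw [pow_succ]; omega⟩
      · rintro ⟨k, hk⟩
        cases k with
        | zero => simp at hk; omega
        | succ k =>
          rw [pow_succ] at hk
          have := h2.2 ⟨k, by omega⟩
          omega

/-- Case `m = 2` of Lemma 13: for `n ≥ 1`, `2^(n-1) ∣ n!` iff `n` is a power of `2`. -/
theorem two_pow_dvd_factorial_iff (n : ℕ) (hn : 1 ≤ n) :
    2 ^ (n - 1) ∣ n ! ↔ ∃ k : ℕ, n = 2 ^ k := by
  obtain ⟨h1, h2⟩ := digsum_aux n hn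
  have hL := sub_one_mul_padicValNat_factorial (p := 2) n
  have hle := Nat.digit_sum_le 2 n
  rw [← h2, padicValNat_dvd_iff_le (Nat.factorial_ne_zero n)]
  omega
end

section
/- Let m be an integer with m ≠ 0, 1, −1. Then for every natural number n ≥ 2, m^n does not divide n·(n−2)!. -/
open Nat

/-- For `m ∈ ℤ` with `m ≠ 0, 1, -1` and every `n ≥ 2`, `m^n` does not divide
`n·(n-2)!`. -/
theorem pow_not_dvd_mul_factorial (m : ℤ) (hm0 : m ≠ 0) (hm1 : m ≠ 1) (hm2 : m ≠ -1)
    (n : ℕ) (hn : 2 ≤ n) :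
    ¬ (m ^ n ∣ (n : ℤ) * ((n - 2)! : ℤ)) := by
  intro h
  have h1 : m.natAbs ^ n ∣ n * (n - 2)! := by
    have := Int.natAbs_dvd_natAbs.mpr h
    simpa [Int.natAbs_pow, Int.natAbs_mul] using this
  have h2 : n * (n - 2)! ∣ n ! := by
    obtain ⟨k, rfl⟩ := Nat.exists_eq_add_of_le' hn
    refine ⟨k + 1, ?_⟩
    simp only [Nat.add_sub_cancel, Nat.factorial_succ]
    ring
  have hne : m.natAbs ≠ 1 := by omega
  obtain ⟨p, hp, hpm⟩ := Nat.exists_prime_and_dvd hne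
  haveI : Fact p.Prime := ⟨hp⟩
  have h3 : p ^ n ∣ n ! := (pow_dvd_pow_of_dvd hpm n).trans (h1.trans h2)
  have h4 := (padicValNat_dvd_iff_le (Nat.factorial_ne_zero n)).mp h3
  have h5 := padicValNat_factorial_lt_of_ne_zero p (n := n) (by omega)
  omega
end
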